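/- Let d ≥ 1, ε > 0 and C > 0, and let N : ℕ^d → [0,∞) satisfy N_m ≤ C·2^{(1-ε)|m|} for all m ∈ ℕ^d, where |m| := m_1+⋯+m_d. Then Σ_{j=1}^∞ Σ_{m∈ℕ^d : 2^{j-1} ≤ |m| ≤ 2^j} Σ_{l∈ℕ^d : |l| ≥ 2^j/ε} N_m·N_l·∏_{i=1}^d (2^{m_i}+2^{l_i})^{-1} < ∞. -/

import Mathlib

open Finset ENNReal

/-!
Dropping `b ^ m_i` from each factor gives `∏ i, (b ^ m_i + b ^ l_i)⁻¹ ≤ b ^ (-|l|)`, so each term is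
at most `C² b ^ ((1 - ε) (|m| + |l|) - |l|)`. For `|m| ≤ ε |l|` the exponent is bounded above by a
negative multiple of `2 |m| + |l|`: it equals `-ε |m| - (ε |l| - |m|)`, and these two nonpositive
parts control both sizes. The dyadic blocks satisfy `j ≤ 2 ^ (j - 1) ≤ |m|`, so half of the decay in
`|m|` pays for the sum over `j`, and what remains is a product of geometric series.
-/

theorem tsum_pi_prod_eq_prod_tsum {ι : Type*} [Fintype ι] {κ : ι → Type*}
    (f : ∀ i, κ i → ℝ≥0∞) : ∑' m : ∀ i, κ i, ∏ i, f i (m i) = ∏ i, ∑' k, f i k := by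
  refine Fintype.induction_empty_option (P := fun ι _ => ∀ (κ : ι → Type _) (f : ∀ i, κ i → ℝ≥0∞),
    ∑' m : ∀ i, κ i, ∏ i, f i (m i) = ∏ i, ∑' k, f i k) ?of_equiv ?empty ?option ι κ f
  case of_equiv =>
    intro α β _ e ih κ f
    let := Fintype.ofEquiv β e.symm
    rw [← (e.piCongrLeft κ).tsum_eq, ← e.prod_comp, ← ih]
    simp only [← e.prod_comp, Equiv.piCongrLeft_apply_apply]
  case empty =>
    intro κ f
    simp only [univ_eq_empty, prod_empty, tsum_fintype, univ_unique, sum_const, card_singleton,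
      one_smul]
  case option =>
    intro α _ ih κ f
    rw [← Equiv.piOptionEquivProd.symm.tsum_eq, ENNReal.tsum_prod', Fintype.prod_option, ← ih]
    simp only [Fintype.prod_option, Equiv.piOptionEquivProd, Equiv.coe_fn_symm_mk,
      ENNReal.tsum_mul_left, ENNReal.tsum_mul_right]

theorem tsum_pow_lt_top {r : ℝ≥0∞} (hr : r < 1) : ∑' n : ℕ, r ^ n < ⊤ := by
  rw [ENNReal.tsum_geometric, ENNReal.inv_lt_top]
  exact tsub_pos_of_lt hr

theorem tsum_pow_sum_lt_top {ι : Type*} [Fintype ι] {r : ℝ≥0∞} (hr : r < 1) :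
    ∑' m : ι → ℕ, r ^ ∑ i, m i < ⊤ := by
  simp only [← prod_pow_eq_pow_sum]
  rw [tsum_pi_prod_eq_prod_tsum fun _ n => r ^ n]
  exact ENNReal.prod_lt_top fun _ _ => tsum_pow_lt_top hr

theorem prod_inv_pow_add_pow_le {ι K : Type*} [Fintype ι] [Semifield K] [LinearOrder K]
    [IsStrictOrderedRing K] {b : K} (hb : 0 < b) (m l : ι → ℕ) :
    ∏ i, (b ^ m i + b ^ l i)⁻¹ ≤ (b ^ ∑ i, l i)⁻¹ := by
  rw [← prod_pow_eq_pow_sum, ← Finset.prod_inv_distrib]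
  gcongr with i
  exact le_add_of_nonneg_left (by positivity)

theorem exists_pos_forall_exponent_le {ε : ℝ} (hε : 0 < ε) :
    ∃ η > 0, ∀ x y : ℝ, x ≤ ε * y → (1 - ε) * (x + y) - y ≤ -η * (2 * x + y) := by
  -- For this `η` the two sides differ by a multiple of `ε * y - x`.
  refine ⟨ε ^ 2 / (1 + 2 * ε), by positivity, fun x y hxy => ?_⟩
  have slack_nonneg : 0 ≤ (1 + ε) / (1 + 2 * ε) * (ε * y - x) :=
    mul_nonneg (by positivity) (sub_nonneg.mpr hxy)
  have exponent_eq : (1 - ε) * (x + y) - y =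
      -(ε ^ 2 / (1 + 2 * ε)) * (2 * x + y) - (1 + ε) / (1 + 2 * ε) * (ε * y - x) := by
    field_simp
    ring
  linarith

section Growth

variable {ι : Type*} [Fintype ι] {b ε C : ℝ} {N : (ι → ℕ) → ℝ}

theorem offdiagonal_term_le (hb : 0 < b) (hN0 : ∀ m, 0 ≤ N m)
    (hN : ∀ m, N m ≤ C * b ^ ((1 - ε) * ∑ i, (m i : ℝ))) (m l : ι → ℕ) :
    N m * N l * ∏ i, (b ^ m i + b ^ l i)⁻¹ ≤
      C ^ 2 * b ^ ((1 - ε) * (∑ i, (m i : ℝ) + ∑ i, (l i : ℝ)) - ∑ i, (l i : ℝ)) :=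
  calc
    _ ≤ C * b ^ ((1 - ε) * ∑ i, (m i : ℝ)) * (C * b ^ ((1 - ε) * ∑ i, (l i : ℝ))) *
        (b ^ ∑ i, l i)⁻¹ := by
      have hCm := (hN0 m).trans (hN m)
      have hCl := (hN0 l).trans (hN l)
      exact mul_le_mul (mul_le_mul (hN m) (hN l) (hN0 l) hCm) (prod_inv_pow_add_pow_le hb m l)
        (by positivity) (mul_nonneg hCm hCl)
    _ = _ := by
      rw [Real.rpow_sub hb, mul_add, Real.rpow_add hb, ← Nat.cast_sum univ l, Real.rpow_natCast]
      ring

theorem exists_offdiagonal_term_le_geometric (hb : 1 < b) (hε : 0 < ε) (hN0 : ∀ m, 0 ≤ N m)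
    (hN : ∀ m, N m ≤ C * b ^ ((1 - ε) * ∑ i, (m i : ℝ))) :
    ∃ q : ℝ, 0 < q ∧ q < 1 ∧ ∀ (j : ℕ) (m l : ι → ℕ),
      (j : ℝ) ≤ ∑ i, (m i : ℝ) → ∑ i, (m i : ℝ) ≤ ε * ∑ i, (l i : ℝ) →
        N m * N l * ∏ i, (b ^ m i + b ^ l i)⁻¹ ≤ C ^ 2 * q ^ (j + (∑ i, m i + ∑ i, l i)) := by
  have hb0 : 0 < b := one_pos.trans hb
  obtain ⟨η, hη, exponent_le⟩ := exists_pos_forall_exponent_le hε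
  refine ⟨b ^ (-η), Real.rpow_pos_of_pos hb0 _,
    Real.rpow_lt_one_of_one_lt_of_neg hb (neg_neg_of_pos hη), fun j m l hjm hml => ?_⟩
  refine (offdiagonal_term_le hb0 hN0 hN m l).trans ?_
  rw [← Real.rpow_mul_natCast hb0.le]
  push_cast
  gcongr
  · exact hb.le
  calc
    _ ≤ -η * (2 * ∑ i, (m i : ℝ) + ∑ i, (l i : ℝ)) := exponent_le _ _ hml
    _ ≤ _ := mul_le_mul_of_nonpos_left (by linarith) (neg_nonpos.mpr hη.le)

theorem offdiagonal_series_estimate_general (hb : 1 < b) (hε : 0 < ε) (hN0 : ∀ m, 0 ≤ N m)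
    (hN : ∀ m, N m ≤ C * b ^ ((1 - ε) * ∑ i, (m i : ℝ))) :
    (∑' (j : ℕ), ∑' (m : ι → ℕ), ∑' (l : ι → ℕ),
        if (j : ℝ) ≤ ∑ i, (m i : ℝ) ∧ ∑ i, (m i : ℝ) ≤ ε * ∑ i, (l i : ℝ) then
          ENNReal.ofReal (N m * N l * ∏ i, (b ^ m i + b ^ l i)⁻¹)
        else 0) < ⊤ := by
  obtain ⟨q, hq0, hq1, term_le⟩ := exists_offdiagonal_term_le_geometric hb hε hN0 hN
  have hr : ENNReal.ofReal q < 1 := ENNReal.ofReal_lt_one.mpr hq1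
  calc
    _ ≤ ∑' (j : ℕ), ∑' (m : ι → ℕ), ∑' (l : ι → ℕ),
        ENNReal.ofReal (C ^ 2) * (ENNReal.ofReal q ^ j *
        (ENNReal.ofReal q ^ (∑ i, m i) * ENNReal.ofReal q ^ (∑ i, l i))) := by
      gcongr with j m l
      rw [← pow_add, ← pow_add, ← ENNReal.ofReal_pow hq0.le, ← ENNReal.ofReal_mul (sq_nonneg C)]
      split_ifs with h
      · exact ENNReal.ofReal_le_ofReal (term_le j m l h.1 h.2)
      · exact zero_le
    _ < ⊤ := by
      simp only [ENNReal.tsum_mul_left, ENNReal.tsum_mul_right]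
      exact ENNReal.mul_lt_top ENNReal.ofReal_lt_top (ENNReal.mul_lt_top (tsum_pow_lt_top hr)
        (ENNReal.mul_lt_top (tsum_pow_sum_lt_top hr) (tsum_pow_sum_lt_top hr)))

end Growth

theorem ite_zero_le_ite_zero {α : Type*} [Zero α] [Preorder α] {p q : Prop} [Decidable p]
    [Decidable q] {a : α} (ha : 0 ≤ a) (hpq : p → q) :
    (if p then a else 0) ≤ if q then a else 0 := by
  by_cases hp : p
  · rw [if_pos hp, if_pos (hpq hp)]
  · rw [if_neg hp]
    split_ifs
    exacts [ha, le_rfl]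

theorem le_and_le_mul_of_dyadic_block {j : ℕ} {ε x y : ℝ} (hε : 0 < ε)
    (hjx : (2 : ℝ) ^ (j - 1) ≤ x) (hxj : x ≤ (2 : ℝ) ^ j) (hjy : (2 : ℝ) ^ j / ε ≤ y) :
    (j : ℝ) ≤ x ∧ x ≤ ε * y := by
  have hj : (j : ℝ) ≤ 2 ^ (j - 1) := mod_cast Nat.le_of_pred_lt Nat.lt_two_pow_self
  exact ⟨hj.trans hjx, hxj.trans ((div_le_iff₀' hε).mp hjy)⟩

/-- The off-diagonal series estimate: if `N_m ≤ C·2^{(1-ε)|m|}`, then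
`Σ_{j≥1} Σ_{2^{j-1} ≤ |m| ≤ 2^j} Σ_{|l| ≥ 2^j/ε} N_m N_l ∏_i (2^{m_i}+2^{l_i})⁻¹ < ∞`. -/
theorem offdiagonal_series_estimate
    (d : ℕ) (hd : 1 ≤ d) (ε C : ℝ) (hε : 0 < ε) (hC : 0 < C)
    (N : (Fin d → ℕ) → ℝ) (hN0 : ∀ m, 0 ≤ N m)
    (hN : ∀ m : Fin d → ℕ, N m ≤ C * (2 : ℝ) ^ ((1 - ε) * ∑ i, (m i : ℝ))) :
    (∑' (j : ℕ), ∑' (m : Fin d → ℕ), ∑' (l : Fin d → ℕ),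
        if 1 ≤ j ∧ (2 : ℝ) ^ (j - 1) ≤ ∑ i, (m i : ℝ) ∧ (∑ i, (m i : ℝ)) ≤ (2 : ℝ) ^ j
            ∧ (2 : ℝ) ^ j / ε ≤ ∑ i, (l i : ℝ) then
          ENNReal.ofReal (N m * N l * ∏ i, ((2 : ℝ) ^ (m i) + (2 : ℝ) ^ (l i))⁻¹)
        else 0) < ⊤ := by
  refine lt_of_le_of_lt ?_ (offdiagonal_series_estimate_general one_lt_two hε hN0 hN)
  gcongr with j m l
  exact ite_zero_le_ite_zero zero_le fun h =>
    le_and_le_mul_of_dyadic_block hε h.2.1 h.2.2.1 h.2.2.2
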